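/- arXiv:2509.23148 — 4 statements merged into one kernel-verified Lean document; each statement's English description precedes it below -/
import Mathlib

section
/- Let ω be a control on [0,T] and let ε > 0. Then there exist k ∈ ℕ and points 0 = t_0 < t_1 < ⋯ < t_k = T such that for every i < k one has ω(t_i+, t_{i+1}−) < ε, where ω(s+, t−) := sup{ ω(s+η, t−η) : 0 < η < (t−s)/2 } denotes the limit of ω(s+η, t−η) as η → 0+ (which exists and equals this supremum by monotonicity of controls). -/
/-- A control on `[0,T]`: nonnegative, vanishing on the diagonal, superadditive. -/
def IsControl (T : ℝ) (ω : ℝ → ℝ → ℝ) : Prop :=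
  (∀ s t : ℝ, 0 ≤ s → s ≤ t → t ≤ T → 0 ≤ ω s t) ∧
  (∀ t : ℝ, 0 ≤ t → t ≤ T → ω t t = 0) ∧
  (∀ s u t : ℝ, 0 ≤ s → s ≤ u → u ≤ t → t ≤ T → ω s u + ω u t ≤ ω s t)

/-- The two-sided open limit `ω(s+, t-) = sup {ω (s+η) (t-η) : 0 < η < (t-s)/2}`. -/
noncomputable def openLimit (ω : ℝ → ℝ → ℝ) (s t : ℝ) : ℝ :=
  sSup {r : ℝ | ∃ η : ℝ, 0 < η ∧ η < (t - s) / 2 ∧ r = ω (s + η) (t - η)}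

theorem openLimit_lt_aux (T : ℝ) (ω : ℝ → ℝ → ℝ) (hω : IsControl T ω) (ε : ℝ) (hε : 0 < ε)
    (s t : ℝ) (hs : 0 ≤ s) (hst : s < t) (ht : t ≤ T)
    (h : ∀ u v, s < u → u ≤ v → v < t → ω u T - ω v T ≤ ε / 2) : openLimit ω s t < ε := by
  have : openLimit ω s t ≤ ε / 2 := by
    apply csSup_le
    · exact ⟨_, (t - s) / 4, by linarith, by linarith, rfl⟩
    · rintro r ⟨η, h1, h2, rfl⟩
      have h3 := h (s + η) (t - η) (by linarith) (by linarith) (by linarith)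
      have h4 := hω.2.2 (s + η) (t - η) T (by linarith) (by linarith) (by linarith) le_rfl
      linarith
  linarith

theorem control_mono_aux (T : ℝ) (ω : ℝ → ℝ → ℝ) (hω : IsControl T ω)
    (u v : ℝ) (hu : 0 ≤ u) (huv : u ≤ v) (hv : v ≤ T) : ω v T ≤ ω u T := by
  have h1 := hω.2.2 u v T hu huv hv le_rfl
  have h2 := hω.1 u v hu huv hv
  linarith

theorem right_aux (T : ℝ) (ω : ℝ → ℝ → ℝ) (hω : IsControl T ω) (ε : ℝ) (hε : 0 < ε)
    (x : ℝ) (hx : 0 ≤ x) (hxT : x < T) : ∃ y, x < y ∧ y ≤ T ∧ openLimit ω x y < ε := by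
  have hne : ((fun u => ω u T) '' Set.Ioc x T).Nonempty := ⟨_, T, ⟨hxT, le_rfl⟩, rfl⟩
  have hbd : BddAbove ((fun u => ω u T) '' Set.Ioc x T) := by
    refine ⟨ω x T, ?_⟩
    rintro _ ⟨u, hu, rfl⟩
    exact control_mono_aux T ω hω x u hx hu.1.le hu.2
  obtain ⟨_, ⟨y, hy, rfl⟩, hlt⟩ := exists_lt_of_lt_csSup hne
    (show sSup ((fun u => ω u T) '' Set.Ioc x T) - ε / 2 < _ by linarith)
  refine ⟨y, hy.1, hy.2, openLimit_lt_aux T ω hω ε hε x y hx hy.1 hy.2 ?_⟩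
  intro u v hu huv hv
  have h1 := le_csSup hbd ⟨u, ⟨hu, by linarith [hy.2]⟩, rfl⟩
  have h2 := control_mono_aux T ω hω v y (by linarith) hv.le hy.2
  simp only at h1 hlt
  linarith

theorem left_aux (T : ℝ) (ω : ℝ → ℝ → ℝ) (hω : IsControl T ω) (ε : ℝ) (hε : 0 < ε)
    (x : ℝ) (hx : 0 < x) (hxT : x ≤ T) :
    ∃ y, y < x ∧ ∀ z, 0 ≤ z → y ≤ z → z < x → openLimit ω z x < ε := by
  have hne : ((fun u => ω u T) '' Set.Ico 0 x).Nonempty := ⟨_, 0, ⟨le_rfl, hx⟩, rfl⟩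
  have hbd : BddBelow ((fun u => ω u T) '' Set.Ico 0 x) := by
    refine ⟨ω x T, ?_⟩
    rintro _ ⟨u, hu, rfl⟩
    exact control_mono_aux T ω hω u x hu.1 hu.2.le hxT
  obtain ⟨_, ⟨y, hy, rfl⟩, hlt⟩ := exists_lt_of_csInf_lt hne
    (show _ < sInf ((fun u => ω u T) '' Set.Ico 0 x) + ε / 2 by linarith)
  refine ⟨y, hy.2, fun z hz hyz hzx => openLimit_lt_aux T ω hω ε hε z x hz hzx hxT ?_⟩
  intro u v hu huv hv
  have h1 := csInf_le hbd ⟨v, ⟨by linarith, hv⟩, rfl⟩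
  have h2 := control_mono_aux T ω hω y u hy.1 (by linarith) (by linarith)
  simp only at h1 hlt
  linarith

theorem chain_aux (R : ℝ → ℝ → Prop) (a b : ℝ) (h : Relation.ReflTransGen R a b) :
    ∃ (k : ℕ) (t : ℕ → ℝ), t 0 = a ∧ t k = b ∧ ∀ i < k, R (t i) (t (i + 1)) := by
  induction h with
  | refl => exact ⟨0, fun _ => a, rfl, rfl, by simp⟩
  | @tail b c _ hbc ih =>
    obtain ⟨k, t, h0, hk, hR⟩ := ih
    refine ⟨k + 1, fun i => if i ≤ k then t i else c, by simp [h0], by simp, ?_⟩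
    intro i hi
    rcases Nat.lt_succ_iff_lt_or_eq.mp hi with h | rfl
    · simpa [h.le, Nat.succ_le_of_lt h] using hR i h
    · simpa [hk] using hbc

/-- for any control `ω` on `[0,T]` and any `ε > 0`, there is a finite
partition `0 = t₀ < t₁ < ⋯ < t_k = T` such that `ω(tᵢ+, tᵢ₊₁-) < ε` for all `i < k`. -/
theorem control_partition_small_open_limits (T : ℝ) (hT : 0 < T)
    (ω : ℝ → ℝ → ℝ) (hω : IsControl T ω) (ε : ℝ) (hε : 0 < ε) :
    ∃ (k : ℕ) (t : Fin (k + 1) → ℝ), StrictMono t ∧ t 0 = 0 ∧ t (Fin.last k) = T ∧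
      ∀ i : Fin k, openLimit ω (t i.castSucc) (t i.succ) < ε := by
  let R : ℝ → ℝ → Prop := fun s t => s < t ∧ openLimit ω s t < ε
  let S : Set ℝ := {a | 0 ≤ a ∧ a ≤ T ∧ Relation.ReflTransGen R 0 a}
  have h0 : (0 : ℝ) ∈ S := ⟨le_rfl, hT.le, .refl⟩
  have hbd : BddAbove S := ⟨T, fun a ha => ha.2.1⟩
  have hc0 : 0 ≤ sSup S := le_csSup hbd h0
  have hcT : sSup S ≤ T := csSup_le ⟨0, h0⟩ fun a ha => ha.2.1
  have hcS : sSup S ∈ S := by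
    rcases hc0.eq_or_lt with h | h
    · rw [← h]; exact h0
    · obtain ⟨y, hy, hz⟩ := left_aux T ω hω ε hε _ h hcT
      obtain ⟨a, ha, hya⟩ := exists_lt_of_lt_csSup ⟨0, h0⟩ hy
      rcases (le_csSup hbd ha).eq_or_lt with h' | h'
      · rw [← h']; exact ha
      · exact ⟨hc0, hcT, ha.2.2.tail ⟨h', hz a ha.1 hya.le h'⟩⟩
  have hcT' : sSup S = T := by
    by_contra hne
    obtain ⟨y, hy, hyT, hl⟩ := right_aux T ω hω ε hε _ hc0 (lt_of_le_of_ne hcT hne)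
    have : y ∈ S := ⟨by linarith, hyT, hcS.2.2.tail ⟨hy, hl⟩⟩
    linarith [le_csSup hbd this]
  rw [hcT'] at hcS
  obtain ⟨k, t, ht0, htk, hR⟩ := chain_aux R 0 T hcS.2.2
  refine ⟨k, fun i => t i, ?_, by simpa using ht0, by simpa using htk, ?_⟩
  · rw [Fin.strictMono_iff_lt_succ]
    intro i
    simpa using (hR i i.2).1
  · intro i
    simpa using (hR i i.2).2
end

section
/- (Generalized sewing lemma: existence and additivity.) Let T > 0, e ≥ 1, and let Ξ : Δ_T → ℝ^e. Suppose there are n ∈ ℕ, controls ω_{1,j}, ω_{2,j} on [0,T], and exponents α_{1,j}, α_{2,j} > 0 with α_{1,j} + α_{2,j} > 1 for j = 1,…,n, such that ‖Ξ_{s,t} − Ξ_{s,u} − Ξ_{u,t}‖ ≤ Σ_{j=1}^n ω_{1,j}(s,u)^{α_{1,j}} ω_{2,j}(u,t)^{α_{2,j}} for all 0 ≤ s ≤ u ≤ t ≤ T. Then there exists a map IΞ : Δ_T → ℝ^e such that: (i) for every (s,t) ∈ Δ_T with s < t, the Riemann sums Σ_{[u,v]∈P} Ξ_{u,v} over finite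 partitions P of [s,t] converge to IΞ_{s,t} in the Refinement Riemann–Stieltjes (RRS) sense, and this RRS-limit is unique; (ii) IΞ_{t,t} = 0; and (iii) IΞ is additive: IΞ_{s,t} = IΞ_{s,u} + IΞ_{u,t} for all 0 ≤ s ≤ u ≤ t ≤ T. -/
/-- A finite partition `s = u₀ < u₁ < ⋯ < u_k = t` of `[s,t]`. -/
def IsPartition (s t : ℝ) (k : ℕ) (u : Fin (k + 1) → ℝ) : Prop :=
  StrictMono u ∧ u 0 = s ∧ u (Fin.last k) = t

/-- The Riemann sum `Σ_{i<k} Ξ_{uᵢ, uᵢ₊₁}` of a two-parameter map over a partition. -/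
noncomputable def riemannSum {e : ℕ} (Ξ : ℝ → ℝ → Fin e → ℝ) (k : ℕ)
    (u : Fin (k + 1) → ℝ) : Fin e → ℝ :=
  ∑ i : Fin k, Ξ (u i.castSucc) (u i.succ)

/-- Refinement Riemann–Stieltjes convergence of the Riemann sums of `Ξ` on `[s,t]`
to the limit `K`: for every `ε > 0` there is a partition of `[s,t]` such that the
Riemann sum over any refinement of it is within `ε` of `K`. -/
def RRSLim {e : ℕ} (Ξ : ℝ → ℝ → Fin e → ℝ) (s t : ℝ) (K : Fin e → ℝ) : Prop :=
  ∀ ε : ℝ, 0 < ε → ∃ (k : ℕ) (u : Fin (k + 1) → ℝ), IsPartition s t k u ∧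
    ∀ (m : ℕ) (v : Fin (m + 1) → ℝ), IsPartition s t m v → Set.range u ⊆ Set.range v →
      ‖riemannSum Ξ m v - K‖ < ε

open Filter Topology

noncomputable def nxt (F : Finset ℝ) (x : ℝ) : ℝ :=
  if h : (F.filter (fun y => x < y)).Nonempty then (F.filter (fun y => x < y)).min' h else x

noncomputable def SS {e : ℕ} (Ξ : ℝ → ℝ → Fin e → ℝ) (F : Finset ℝ) (s t : ℝ) : Fin e → ℝ :=
  ∑ x ∈ F.filter (fun x => s ≤ x ∧ x < t), Ξ x (nxt F x)

lemma nxt_spec {F : Finset ℝ} {x y : ℝ} (hy : y ∈ F) (hxy : x < y) :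
    nxt F x ∈ F ∧ x < nxt F x ∧ ∀ z ∈ F, x < z → nxt F x ≤ z := by
  have h : (F.filter (fun y => x < y)).Nonempty := ⟨y, by simp [hy, hxy]⟩
  unfold nxt
  rw [dif_pos h]
  have := Finset.min'_mem _ h
  rw [Finset.mem_filter] at this
  refine ⟨this.1, this.2, fun z hz hxz => Finset.min'_le _ _ (by simp [hz, hxz])⟩

lemma SS_add {e : ℕ} (Ξ : ℝ → ℝ → Fin e → ℝ) (F : Finset ℝ) {s u t : ℝ} (h1 : s ≤ u)
    (h2 : u ≤ t) : SS Ξ F s t = SS Ξ F s u + SS Ξ F u t := by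
  unfold SS
  rw [← Finset.sum_union]
  · congr 1
    ext x
    simp only [Finset.mem_union, Finset.mem_filter]
    grind
  · rw [Finset.disjoint_left]
    intro x
    simp only [Finset.mem_filter]
    grind

lemma SS_self {e : ℕ} (Ξ : ℝ → ℝ → Fin e → ℝ) (F : Finset ℝ) (s : ℝ) : SS Ξ F s s = 0 := by
  unfold SS
  rw [Finset.filter_false_of_mem, Finset.sum_empty]
  grind

lemma SS_single {e : ℕ} (Ξ : ℝ → ℝ → Fin e → ℝ) {F : Finset ℝ} {x y : ℝ} (hx : x ∈ F)
    (hy : y ∈ F) (hxy : x < y) : SS Ξ F x (nxt F x) = Ξ x (nxt F x) := by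
  obtain ⟨h1, h2, h3⟩ := nxt_spec hy hxy
  have : F.filter (fun z => x ≤ z ∧ z < nxt F x) = {x} := by
    ext z
    simp only [Finset.mem_filter, Finset.mem_singleton]
    constructor
    · rintro ⟨a, b, c⟩
      by_contra hne
      exact absurd (h3 z a (lt_of_le_of_ne b (Ne.symm hne))) (not_le.2 c)
    · rintro rfl
      exact ⟨hx, le_rfl, h2⟩
  unfold SS
  rw [this, Finset.sum_singleton]

lemma part_of_finset {F : Finset ℝ} {s t : ℝ} (hst : s ≤ t) (hs : s ∈ F) (ht : t ∈ F) :
    ∃ (m : ℕ) (v : Fin (m + 1) → ℝ), IsPartition s t m v ∧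
      ∀ x, x ∈ Set.range v ↔ x ∈ F ∧ s ≤ x ∧ x ≤ t := by
  set G := F.filter (fun x => s ≤ x ∧ x ≤ t) with hG
  have hsG : s ∈ G := by simp [hG, hs, hst]
  have htG : t ∈ G := by simp [hG, ht, hst]
  have hpos : 0 < G.card := Finset.card_pos.2 ⟨s, hsG⟩
  obtain ⟨m, hm⟩ : ∃ m, G.card = m + 1 := ⟨G.card - 1, by omega⟩
  have hr : ∀ x, x ∈ Set.range (G.orderEmbOfFin hm) ↔ x ∈ F ∧ s ≤ x ∧ x ≤ t := by
    intro x
    rw [Finset.range_orderEmbOfFin]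
    simp [hG]
  have hmono := (G.orderEmbOfFin hm).strictMono
  refine ⟨m, G.orderEmbOfFin hm, ⟨hmono, ?_, ?_⟩, hr⟩
  · obtain ⟨i, hi⟩ := (hr s).2 ⟨hs, le_rfl, hst⟩
    apply le_antisymm
    · rw [← hi]; exact hmono.monotone (Fin.zero_le i)
    · exact ((hr _).1 ⟨0, rfl⟩).2.1
  · obtain ⟨i, hi⟩ := (hr t).2 ⟨ht, hst, le_rfl⟩
    apply le_antisymm
    · exact ((hr _).1 ⟨Fin.last m, rfl⟩).2.2
    · rw [← hi]; exact hmono.monotone (Fin.le_last i)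

lemma rs_eq {e : ℕ} (Ξ : ℝ → ℝ → Fin e → ℝ) {F : Finset ℝ} {s t : ℝ} {m : ℕ}
    {v : Fin (m + 1) → ℝ} (hv : IsPartition s t m v)
    (hr : ∀ x, x ∈ Set.range v ↔ x ∈ F ∧ s ≤ x ∧ x ≤ t) :
    riemannSum Ξ m v = SS Ξ F s t := by
  obtain ⟨hm, h0, hl⟩ := hv
  unfold riemannSum SS
  have hF : F.filter (fun x => s ≤ x ∧ x < t) =
      Finset.univ.image (fun i : Fin m => v i.castSucc) := by
    ext x
    simp only [Finset.mem_filter, Finset.mem_image, Finset.mem_univ, true_and]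
    constructor
    · rintro ⟨a, b, c⟩
      obtain ⟨i, rfl⟩ := (hr x).2 ⟨a, b, c.le⟩
      rw [← hl, hm.lt_iff_lt] at c
      exact ⟨i.castPred c.ne, by simp⟩
    · rintro ⟨i, rfl⟩
      have := (hr _).1 ⟨i.castSucc, rfl⟩
      refine ⟨this.1, this.2.1, ?_⟩
      rw [← hl]
      exact hm (Fin.castSucc_lt_last i)
  rw [hF, Finset.sum_image]
  · apply Finset.sum_congr rfl
    intro i _
    congr 1
    have hlt : v i.castSucc < v i.succ := hm (Fin.castSucc_lt_succ)
    have hmem := (hr _).1 ⟨i.succ, rfl⟩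
    obtain ⟨a, b, c⟩ := nxt_spec hmem.1 hlt
    have hle := c _ hmem.1 hlt
    apply le_antisymm _ hle
    have hs' := ((hr _).1 ⟨i.castSucc, rfl⟩).2.1
    obtain ⟨k, hk⟩ := (hr _).2 ⟨a, hs'.trans b.le, hle.trans hmem.2.2⟩
    rw [← hk] at b ⊢
    rw [hm.lt_iff_lt] at b
    exact hm.monotone (Fin.castSucc_lt_iff_succ_le.1 b)
  · intro i _ j _ h
    exact Fin.castSucc_injective m (hm.injective h)

lemma rrs_iff {e : ℕ} (Ξ : ℝ → ℝ → Fin e → ℝ) {s t : ℝ} (hst : s ≤ t) (K : Fin e → ℝ) :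
    RRSLim Ξ s t K ↔ Tendsto (fun F : Finset ℝ => SS Ξ F s t) atTop (𝓝 K) := by
  classical
  rw [Metric.tendsto_atTop]
  constructor
  · intro h ε hε
    obtain ⟨k, u, hu, H⟩ := h ε hε
    refine ⟨Finset.univ.image u, fun F hF => ?_⟩
    have hmem : ∀ i, u i ∈ F := fun i => hF (by simp)
    have hs : s ∈ F := hu.2.1 ▸ hmem 0
    have ht : t ∈ F := hu.2.2 ▸ hmem (Fin.last k)
    obtain ⟨m, v, hv, hr⟩ := part_of_finset hst hs ht
    rw [dist_eq_norm, ← rs_eq Ξ hv hr]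
    apply H m v hv
    rintro _ ⟨i, rfl⟩
    refine (hr _).2 ⟨hmem i, ?_, ?_⟩
    · rw [← hu.2.1]; exact hu.1.monotone (Fin.zero_le i)
    · rw [← hu.2.2]; exact hu.1.monotone (Fin.le_last i)
  · intro h ε hε
    obtain ⟨F0, H⟩ := h ε hε
    obtain ⟨k, u, hu, hur⟩ := part_of_finset (F := insert s (insert t F0)) hst (by simp) (by simp)
    refine ⟨k, u, hu, fun m v hv huv => ?_⟩
    have := H (F0 ∪ Finset.univ.image v) Finset.subset_union_left
    rw [dist_eq_norm] at this
    rwa [rs_eq Ξ hv (F := F0 ∪ Finset.univ.image v)]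
    intro x
    constructor
    · rintro ⟨i, rfl⟩
      refine ⟨by simp, ?_, ?_⟩
      · rw [← hv.2.1]; exact hv.1.monotone (Fin.zero_le i)
      · rw [← hv.2.2]; exact hv.1.monotone (Fin.le_last i)
    · rintro ⟨a, b, c⟩
      rw [Finset.mem_union] at a
      rcases a with a | a
      · exact huv ((hur x).2 ⟨by simp [a], b, c⟩)
      · simpa using a

lemma ctrl_mono {T : ℝ} {ω : ℝ → ℝ → ℝ} (h : IsControl T ω) {a b c d : ℝ} (h0 : 0 ≤ a)
    (h1 : a ≤ b) (h2 : b ≤ c) (h3 : c ≤ d) (h4 : d ≤ T) : ω b c ≤ ω a d := by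
  have e1 := h.2.2 a b d h0 h1 (h2.trans h3) h4
  have e2 := h.2.2 b c d (h0.trans h1) h2 h3 h4
  have e3 := h.1 a b h0 h1 (by linarith)
  have e4 := h.1 c d (by linarith) h3 h4
  linarith

lemma maximal {e : ℕ} (Ξ : ℝ → ℝ → Fin e → ℝ) {T : ℝ} {ω : ℝ → ℝ → ℝ} (h : IsControl T ω)
    {p q κ θ C : ℝ} (hp : 0 ≤ p) (hq : q ≤ T) (hκ : 0 ≤ κ) (hθ : 0 < θ) (hC0 : 0 ≤ C)
    (hC : 2 * (C * (1 / 2 : ℝ) ^ θ) + 2 ≤ C)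
    (h0 : ∀ x, p ≤ x → x ≤ q → Ξ x x = 0)
    (hδ : ∀ s u t, p ≤ s → s ≤ u → u ≤ t → t ≤ q →
      ‖Ξ s t - Ξ s u - Ξ u t‖ ≤ κ * ω s t ^ θ) (F : Finset ℝ) :
    ∀ (N : ℕ) (x y : ℝ), p ≤ x → x ≤ y → y ≤ q → x ∈ F → y ∈ F →
      (F.filter (fun z => x ≤ z ∧ z < y)).card ≤ N →
      ‖SS Ξ F x y - Ξ x y‖ ≤ C * (κ * ω x y ^ θ) := by
  intro N
  induction N with
  | zero =>
    intro x y hx hxy hy hxF hyF hc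
    have hxy' : x = y := by
      by_contra hne
      have : x ∈ F.filter (fun z => x ≤ z ∧ z < y) := by
        simp [hxF, lt_of_le_of_ne hxy hne]
      rw [Nat.le_zero, Finset.card_eq_zero] at hc
      rw [hc] at this
      simp at this
    subst hxy'
    rw [SS_self, h0 x hx hy]
    simp only [sub_self, norm_zero]
    have := Real.rpow_nonneg (h.1 x x (hp.trans hx) le_rfl (hy.trans hq)) θ
    positivity
  | succ N ih =>
    intro x y hx hxy hy hxF hyF hc
    have hωnn : 0 ≤ ω x y := h.1 x y (hp.trans hx) hxy (hy.trans hq)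
    rcases hxy.eq_or_lt with hxy' | hlt
    · subst hxy'
      rw [SS_self, h0 x hx hy]
      simp only [sub_self, norm_zero]
      have := Real.rpow_nonneg hωnn θ
      positivity
    set G := F.filter (fun z => x ≤ z ∧ z < y ∧ ω x z ≤ ω x y / 2) with hG
    have hGx : x ∈ G := by
      simp only [hG, Finset.mem_filter]
      refine ⟨hxF, le_rfl, hlt, ?_⟩
      rw [h.2.1 x (hp.trans hx) (by linarith)]
      linarith
    set a := G.max' ⟨x, hGx⟩ with ha
    have haG : a ∈ G := Finset.max'_mem _ _
    have hamax : ∀ z ∈ G, z ≤ a := fun z hz => Finset.le_max' _ _ hz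
    obtain ⟨haF, hxa, hay, haω⟩ := by simpa only [hG, Finset.mem_filter] using haG
    obtain ⟨hbF, hab, hbmin⟩ := nxt_spec hyF hay
    have hsingle := SS_single Ξ haF hyF hay
    set b := nxt F a with hb
    have hby : b ≤ y := hbmin y hyF hay
    have hbω : ω b y ≤ ω x y / 2 := by
      rcases hby.eq_or_lt with hby' | hby'
      · rw [hby', h.2.1 y (by linarith) (by linarith)]
        linarith
      · by_contra hcon
        have hsup := h.2.2 x b y (by linarith) (by linarith) hby (by linarith)
        have : b ∈ G := by
          simp only [hG, Finset.mem_filter]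
          exact ⟨hbF, by linarith, hby', by linarith⟩
        exact absurd (hamax b this) (not_le.2 hab)
    have c1 : (F.filter (fun z => x ≤ z ∧ z < a)).card ≤ N := by
      have : (F.filter (fun z => x ≤ z ∧ z < a)).card <
          (F.filter (fun z => x ≤ z ∧ z < y)).card := by
        apply Finset.card_lt_card
        rw [Finset.ssubset_iff_of_subset]
        · exact ⟨a, by simp [haF, hxa, hay], by simp⟩
        · intro z
          simp only [Finset.mem_filter]
          grind
      omega
    have c2 : (F.filter (fun z => b ≤ z ∧ z < y)).card ≤ N := by
      have : (F.filter (fun z => b ≤ z ∧ z < y)).card <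
          (F.filter (fun z => x ≤ z ∧ z < y)).card := by
        apply Finset.card_lt_card
        rw [Finset.ssubset_iff_of_subset]
        · refine ⟨x, by simp [hxF, hlt], ?_⟩
          simp only [Finset.mem_filter]
          grind
        · intro z
          simp only [Finset.mem_filter]
          grind
      omega
    have i1 := ih x a hx hxa (by linarith) hxF haF c1
    have i2 := ih b y (by linarith) hby hy hbF hyF c2
    have d1 := hδ x a y hx hxa hay.le hy
    have d2 := hδ a b y (by linarith) hab.le hby hy
    have hω1 : ω x a ^ θ ≤ (1 / 2 : ℝ) ^ θ * ω x y ^ θ := by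
      rw [← Real.mul_rpow (by norm_num) hωnn]
      exact Real.rpow_le_rpow (h.1 x a (by linarith) hxa (by linarith)) (by linarith) hθ.le
    have hω2 : ω b y ^ θ ≤ (1 / 2 : ℝ) ^ θ * ω x y ^ θ := by
      rw [← Real.mul_rpow (by norm_num) hωnn]
      exact Real.rpow_le_rpow (h.1 b y (by linarith) hby (by linarith)) (by linarith) hθ.le
    have hω3 : ω a y ^ θ ≤ ω x y ^ θ :=
      Real.rpow_le_rpow (h.1 a y (by linarith) hay.le (by linarith))
        (ctrl_mono h (by linarith) hxa hay.le le_rfl (by linarith)) hθ.le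
    have key : SS Ξ F x y - Ξ x y = (SS Ξ F x a - Ξ x a) + (SS Ξ F b y - Ξ b y)
        - (Ξ x y - Ξ x a - Ξ a y) - (Ξ a y - Ξ a b - Ξ b y) := by
      rw [SS_add Ξ F hxa hay.le, SS_add Ξ F hab.le hby, hsingle]
      abel
    have hW : 0 ≤ ω x y ^ θ := Real.rpow_nonneg hωnn θ
    have n1 : ‖SS Ξ F x y - Ξ x y‖ ≤ C * (κ * ω x a ^ θ) + C * (κ * ω b y ^ θ)
        + κ * ω x y ^ θ + κ * ω a y ^ θ := by
      rw [key]
      refine (norm_sub_le _ _).trans (add_le_add ((norm_sub_le _ _).trans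
        (add_le_add ((norm_add_le _ _).trans (add_le_add i1 i2)) d1)) d2)
    have e1 : C * (κ * ω x a ^ θ) ≤ C * (κ * ((1 / 2 : ℝ) ^ θ * ω x y ^ θ)) := by gcongr
    have e2 : C * (κ * ω b y ^ θ) ≤ C * (κ * ((1 / 2 : ℝ) ^ θ * ω x y ^ θ)) := by gcongr
    have e3 : κ * ω a y ^ θ ≤ κ * ω x y ^ θ := by gcongr
    have e4 := mul_le_mul_of_nonneg_right hC (mul_nonneg hκ hW)
    nlinarith

lemma right_small {T : ℝ} {ω : ℝ → ℝ → ℝ} (h : IsControl T ω) {p ε : ℝ} (hp : 0 ≤ p)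
    (hpT : p < T) (hε : 0 < ε) : ∃ r, p < r ∧ r ≤ T ∧
      ∀ u v, p < u → u ≤ v → v ≤ r → ω u v ≤ ε := by
  set A := (fun r => ω p r) '' Set.Ioc p T
  have hne : A.Nonempty := ⟨_, T, ⟨hpT, le_rfl⟩, rfl⟩
  have hbd : BddBelow A := ⟨0, by
    rintro _ ⟨r, hr, rfl⟩
    exact h.1 p r hp hr.1.le hr.2⟩
  obtain ⟨_, ⟨r, hr, rfl⟩, hlt⟩ := exists_lt_of_csInf_lt hne (lt_add_of_pos_right (sInf A) hε)
  refine ⟨r, hr.1, hr.2, fun u v hu huv hv => ?_⟩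
  have h1 : sInf A ≤ ω p u := csInf_le hbd ⟨u, ⟨hu, by linarith [hr.2]⟩, rfl⟩
  have h2 := h.2.2 p u v hp hu.le huv (by linarith [hr.2])
  have h3 := ctrl_mono h hp le_rfl (hu.le.trans huv) hv hr.2
  simp only at hlt
  linarith

lemma left_small {T : ℝ} {ω : ℝ → ℝ → ℝ} (h : IsControl T ω) {p ε : ℝ} (hp : 0 < p)
    (hpT : p ≤ T) (hε : 0 < ε) : ∃ r, r < p ∧ 0 ≤ r ∧
      ∀ u v, v < p → u ≤ v → r ≤ u → ω u v ≤ ε := by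
  set A := (fun r => ω r p) '' Set.Ico 0 p
  have hne : A.Nonempty := ⟨_, 0, ⟨le_rfl, hp⟩, rfl⟩
  have hbd : BddBelow A := ⟨0, by
    rintro _ ⟨r, hr, rfl⟩
    exact h.1 r p hr.1 hr.2.le hpT⟩
  obtain ⟨_, ⟨r, hr, rfl⟩, hlt⟩ := exists_lt_of_csInf_lt hne (lt_add_of_pos_right (sInf A) hε)
  refine ⟨r, hr.2, hr.1, fun u v hv huv hu => ?_⟩
  have h1 : sInf A ≤ ω v p := csInf_le hbd ⟨v, ⟨by linarith [hr.1], hv⟩, rfl⟩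
  have h2 := h.2.2 u v p (by linarith [hr.1]) huv hv.le hpT
  have h3 := ctrl_mono h hr.1 hu (huv.trans hv.le) le_rfl hpT
  simp only at hlt
  linarith

lemma cousin {T : ℝ} (Q : ℝ → ℝ → Prop)
    (hadd : ∀ s u t, 0 ≤ s → s ≤ u → u ≤ t → t ≤ T → Q s u → Q u t → Q s t)
    (hrefl : ∀ s, 0 ≤ s → s ≤ T → Q s s)
    (hR : ∀ p, 0 ≤ p → p < T → ∃ r, p < r ∧ r ≤ T ∧ ∀ v, p ≤ v → v ≤ r → Q p v)
    (hL : ∀ p, 0 < p → p ≤ T → ∃ r, r < p ∧ 0 ≤ r ∧ ∀ v, r ≤ v → v ≤ p → Q v p)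
    {s t : ℝ} (hs : 0 ≤ s) (hst : s ≤ t) (ht : t ≤ T) : Q s t := by
  set A := {x | s ≤ x ∧ x ≤ t ∧ Q s x}
  have hsA : s ∈ A := ⟨le_rfl, hst, hrefl s hs (hst.trans ht)⟩
  have hbd : BddAbove A := ⟨t, fun x hx => hx.2.1⟩
  set c := sSup A with hc
  have hsc : s ≤ c := le_csSup hbd hsA
  have hct : c ≤ t := csSup_le ⟨s, hsA⟩ fun x hx => hx.2.1
  have hQc : Q s c := by
    rcases hsc.eq_or_lt with h | h
    · rw [← h]; exact hsA.2.2
    · obtain ⟨r, hr, hr0, H⟩ := hL c (by linarith) (by linarith)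
      obtain ⟨x, hx, hrx⟩ := exists_lt_of_lt_csSup ⟨s, hsA⟩ hr
      have hxc : x ≤ c := le_csSup hbd hx
      exact hadd s x c hs hx.1 hxc (by linarith) hx.2.2 (H x hrx.le hxc)
  rcases hct.eq_or_lt with h | h
  · rwa [← h]
  · obtain ⟨r, hr, hrT, H⟩ := hR c (by linarith) (by linarith)
    have h1 : c < min r t := lt_min hr h
    have : min r t ∈ A := ⟨by linarith, min_le_right _ _,
      hadd s c _ hs hsc h1.le ((min_le_right _ _).trans ht) hQc (H _ h1.le (min_le_left _ _))⟩
    exact absurd (le_csSup hbd this) (not_le.2 h1)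

lemma exists_eta {n : ℕ} (f : Fin n → ℝ) (hf : ∀ j, 0 < f j) : ∃ η : ℝ, 0 < η ∧ ∀ j, η ≤ f j := by
  induction n with
  | zero => exact ⟨1, one_pos, fun j => j.elim0⟩
  | succ n ih =>
    obtain ⟨η, h1, h2⟩ := ih (fun j => f j.castSucc) (fun j => hf _)
    refine ⟨min η (f (Fin.last n)), lt_min h1 (hf _), fun j => ?_⟩
    induction j using Fin.lastCases with
    | last => exact min_le_right _ _
    | cast i => exact (min_le_left _ _).trans (h2 i)

lemma pow_bound {A x M ε a b η : ℝ} (hx : 0 ≤ x) (hxA : x ≤ A) (hAM : A ≤ M) (hxε : x ≤ ε)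
    (hη : 0 < η) (ha : η ≤ a) (hb : η ≤ b) (hab : 1 + 2 * η ≤ a + b) :
    A ^ a * x ^ b ≤ M ^ (a + b - 1 - 2 * η) * (ε ^ η * A ^ (1 + η)) := by
  have hA : 0 ≤ A := hx.trans hxA
  have e1 : x ^ b = x ^ (b - η) * x ^ η := by
    rw [← Real.rpow_add_of_nonneg hx (by linarith) hη.le]; ring_nf
  have e2 : x ^ (b - η) ≤ A ^ (b - η) := Real.rpow_le_rpow hx hxA (by linarith)
  have e3 : x ^ η ≤ ε ^ η := Real.rpow_le_rpow hx hxε hη.le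
  have e4 : A ^ a * A ^ (b - η) = A ^ (a + b - 1 - 2 * η) * A ^ (1 + η) := by
    rw [← Real.rpow_add_of_nonneg hA (by linarith) (by linarith),
      ← Real.rpow_add_of_nonneg hA (by linarith) (by linarith)]
    ring_nf
  have e5 : A ^ (a + b - 1 - 2 * η) ≤ M ^ (a + b - 1 - 2 * η) :=
    Real.rpow_le_rpow hA hAM (by linarith)
  have p1 : 0 ≤ A ^ a := Real.rpow_nonneg hA _
  have p2 : 0 ≤ A ^ (b - η) := Real.rpow_nonneg hA _
  have p3 : 0 ≤ x ^ η := Real.rpow_nonneg hx _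
  have p4 : 0 ≤ A ^ (1 + η) := Real.rpow_nonneg hA _
  have p5 : 0 ≤ ε ^ η := p3.trans e3
  calc A ^ a * x ^ b = A ^ a * (x ^ (b - η) * x ^ η) := by rw [e1]
    _ ≤ A ^ a * (A ^ (b - η) * ε ^ η) := by gcongr
    _ = (A ^ a * A ^ (b - η)) * ε ^ η := by ring
    _ = A ^ (a + b - 1 - 2 * η) * (ε ^ η * A ^ (1 + η)) := by rw [e4]; ring
    _ ≤ _ := by gcongr

lemma rpow_superadd {a b θ : ℝ} (ha : 0 ≤ a) (hb : 0 ≤ b) (hθ : 1 ≤ θ) :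
    a ^ θ + b ^ θ ≤ (a + b) ^ θ := Real.add_rpow_le_rpow_add ha hb hθ

/-- generalized sewing lemma: existence and additivity. -/
theorem generalized_sewing_existence (T : ℝ) (hT : 0 < T) (e : ℕ) (he : 1 ≤ e)
    (Ξ : ℝ → ℝ → Fin e → ℝ) (n : ℕ)
    (ω₁ ω₂ : Fin n → ℝ → ℝ → ℝ) (α₁ α₂ : Fin n → ℝ)
    (hω₁ : ∀ j, IsControl T (ω₁ j)) (hω₂ : ∀ j, IsControl T (ω₂ j))
    (hα₁ : ∀ j, 0 < α₁ j) (hα₂ : ∀ j, 0 < α₂ j)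
    (hα : ∀ j, 1 < α₁ j + α₂ j)
    (hΞ : ∀ s u t : ℝ, 0 ≤ s → s ≤ u → u ≤ t → t ≤ T →
      ‖Ξ s t - Ξ s u - Ξ u t‖ ≤ ∑ j : Fin n, ω₁ j s u ^ α₁ j * ω₂ j u t ^ α₂ j) :
    ∃ I : ℝ → ℝ → Fin e → ℝ,
      (∀ s t : ℝ, 0 ≤ s → s < t → t ≤ T →
        RRSLim Ξ s t (I s t) ∧ ∀ K' : Fin e → ℝ, RRSLim Ξ s t K' → K' = I s t) ∧
      (∀ t : ℝ, 0 ≤ t → t ≤ T → I t t = 0) ∧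
      (∀ s u t : ℝ, 0 ≤ s → s ≤ u → u ≤ t → t ≤ T → I s t = I s u + I u t) := by
  classical
  -- the key limit
  suffices hlim : ∀ s t : ℝ, 0 ≤ s → s ≤ t → t ≤ T →
      ∃ K, Tendsto (fun F : Finset ℝ => SS Ξ F s t) atTop (𝓝 K) by
    have hl : ∀ s t : ℝ, 0 ≤ s → s ≤ t → t ≤ T →
        Tendsto (fun F : Finset ℝ => SS Ξ F s t) atTop
          (𝓝 (limUnder atTop (fun F : Finset ℝ => SS Ξ F s t))) :=
      fun s t h0 h1 h2 => tendsto_nhds_limUnder (hlim s t h0 h1 h2)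
    refine ⟨fun s t => limUnder atTop (fun F : Finset ℝ => SS Ξ F s t), ?_, ?_, ?_⟩
    · intro s t h0 h1 h2
      refine ⟨(rrs_iff Ξ h1.le _).2 (hl s t h0 h1.le h2), fun K' hK' => ?_⟩
      exact tendsto_nhds_unique ((rrs_iff Ξ h1.le _).1 hK') (hl s t h0 h1.le h2)
    · intro t h0 h1
      refine tendsto_nhds_unique (hl t t h0 le_rfl h1) ?_
      simp only [SS_self]
      exact tendsto_const_nhds
    · intro s u t h0 h1 h2 h3
      refine tendsto_nhds_unique (hl s t h0 (h1.trans h2) h3) ?_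
      simp only [fun F => SS_add Ξ F h1 h2]
      exact (hl s u h0 h1 (h2.trans h3)).add (hl u t (h0.trans h1) h2 h3)
  -- reduction to a single control
  set ω : ℝ → ℝ → ℝ := fun s t => ∑ j, (ω₁ j s t + ω₂ j s t) with hωdef
  have hω : IsControl T ω := by
    refine ⟨?_, ?_, ?_⟩
    · intro s t h0 h1 h2
      exact Finset.sum_nonneg fun j _ =>
        add_nonneg ((hω₁ j).1 s t h0 h1 h2) ((hω₂ j).1 s t h0 h1 h2)
    · intro t h0 h1
      simp [hωdef, fun j => (hω₁ j).2.1 t h0 h1, fun j => (hω₂ j).2.1 t h0 h1]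
    · intro s u t h0 h1 h2 h3
      simp only [hωdef]
      rw [← Finset.sum_add_distrib]
      refine Finset.sum_le_sum fun j _ => ?_
      linarith [(hω₁ j).2.2 s u t h0 h1 h2 h3, (hω₂ j).2.2 s u t h0 h1 h2 h3]
  have hle : ∀ j s t, 0 ≤ s → s ≤ t → t ≤ T → ω₁ j s t ≤ ω s t ∧ ω₂ j s t ≤ ω s t := by
    intro j s t h0 h1 h2
    have h3 : ω₁ j s t + ω₂ j s t ≤ ω s t :=
      Finset.single_le_sum (f := fun j => ω₁ j s t + ω₂ j s t) (fun i _ =>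
        add_nonneg ((hω₁ i).1 s t h0 h1 h2) ((hω₂ i).1 s t h0 h1 h2)) (Finset.mem_univ j)
    have h4 := (hω₁ j).1 s t h0 h1 h2
    have h5 := (hω₂ j).1 s t h0 h1 h2
    constructor <;> linarith
  obtain ⟨η, hη, hηle⟩ := exists_eta
    (fun j => min (α₁ j) (min (α₂ j) ((α₁ j + α₂ j - 1) / 2)))
    (fun j => lt_min (hα₁ j) (lt_min (hα₂ j) (by linarith [hα j])))
  have hη1 : ∀ j, η ≤ α₁ j := fun j => (hηle j).trans (min_le_left _ _)
  have hη2 : ∀ j, η ≤ α₂ j := fun j =>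
    (hηle j).trans ((min_le_right _ _).trans (min_le_left _ _))
  have hη3 : ∀ j, 1 + 2 * η ≤ α₁ j + α₂ j := fun j => by
    have := (hηle j).trans ((min_le_right _ _).trans (min_le_right _ _))
    linarith
  set M := ω 0 T with hM
  have hM0 : 0 ≤ M := hω.1 0 T le_rfl hT.le le_rfl
  set D := ∑ j, M ^ (α₁ j + α₂ j - 1 - 2 * η) with hD
  have hD0 : 0 ≤ D := Finset.sum_nonneg fun j _ => Real.rpow_nonneg hM0 _
  have hdiag : ∀ t, 0 ≤ t → t ≤ T → Ξ t t = 0 := by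
    intro t h0 h1
    have := hΞ t t t h0 le_rfl le_rfl h1
    have hz : ∑ j : Fin n, ω₁ j t t ^ α₁ j * ω₂ j t t ^ α₂ j = 0 := by
      refine Finset.sum_eq_zero fun j _ => ?_
      rw [(hω₁ j).2.1 t h0 h1, Real.zero_rpow (hα₁ j).ne', zero_mul]
    rw [hz] at this
    simpa using this
  have hloc : ∀ ε s u t, 0 ≤ s → s ≤ u → u ≤ t → t ≤ T → (ω s u ≤ ε ∨ ω u t ≤ ε) →
      ‖Ξ s t - Ξ s u - Ξ u t‖ ≤ D * ε ^ η * ω s t ^ (1 + η) := by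
    intro ε s u t h0 h1 h2 h3 hor
    refine (hΞ s u t h0 h1 h2 h3).trans ?_
    rw [hD, Finset.sum_mul, Finset.sum_mul]
    refine Finset.sum_le_sum fun j _ => ?_
    have a1 := (hω₁ j).1 s u h0 h1 (h2.trans h3)
    have a2 := (hω₂ j).1 u t (h0.trans h1) h2 h3
    have b1 := (hle j s u h0 h1 (h2.trans h3)).1
    have b2 := (hle j u t (h0.trans h1) h2 h3).2
    have c1 : ω s u ≤ ω s t := ctrl_mono hω h0 le_rfl h1 h2 h3
    have c2 : ω u t ≤ ω s t := ctrl_mono hω h0 h1 h2 le_rfl h3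
    have d : ω s t ≤ M := ctrl_mono hω le_rfl h0 (h1.trans h2) h3 le_rfl
    have hst0 : 0 ≤ ω s t := hω.1 s t h0 (h1.trans h2) h3
    rw [mul_assoc]
    rcases hor with h | h
    · have hp := pow_bound (A := ω s t) (x := ω₁ j s u) (M := M) (ε := ε) (a := α₂ j)
        (b := α₁ j) a1 (b1.trans c1) d (b1.trans h) hη (hη2 j) (hη1 j) (by linarith [hη3 j])
      rw [add_comm (α₂ j), mul_comm (ω s t ^ α₂ j)] at hp
      refine le_trans ?_ hp
      gcongr
      · exact (hα₂ j).le
      · exact b2.trans c2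
    · have hp := pow_bound (A := ω s t) (x := ω₂ j u t) (M := M) (ε := ε) (a := α₁ j)
        (b := α₂ j) a2 (b2.trans c2) d (b2.trans h) hη (hη1 j) (hη2 j) (hη3 j)
      refine le_trans ?_ hp
      gcongr
      · exact (hα₁ j).le
      · exact b1.trans c1
  -- the constant of the maximal inequality
  obtain ⟨C, hC0, hC⟩ : ∃ C : ℝ, 0 ≤ C ∧ 2 * (C * (1 / 2 : ℝ) ^ (1 + η)) + 2 ≤ C := by
    have h1 : (1 / 2 : ℝ) ^ η < 1 := Real.rpow_lt_one (by norm_num) (by norm_num) hη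
    have h2 : (1 / 2 : ℝ) ^ (1 + η) = 1 / 2 * (1 / 2 : ℝ) ^ η := by
      rw [Real.rpow_add (by norm_num), Real.rpow_one]
    have h3 : 0 < 1 - (1 / 2 : ℝ) ^ η := by linarith
    refine ⟨2 / (1 - (1 / 2 : ℝ) ^ η), by positivity, ?_⟩
    rw [h2]
    apply le_of_eq
    field_simp
    ring
  have hmain : ∀ ε : ℝ, 0 < ε → ∀ s t, 0 ≤ s → s ≤ t → t ≤ T →
      ∃ (F₀ : Finset ℝ) (K : Fin e → ℝ), ∀ F, F₀ ⊆ F →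
        ‖SS Ξ F s t - K‖ ≤ C * (D * ε ^ η * ω s t ^ (1 + η)) := by
    intro ε hε s t h0 h1 h2
    have hκ : 0 ≤ D * ε ^ η := by positivity
    have hpiece : ∀ p q, 0 ≤ p → p ≤ q → q ≤ T →
        (∀ s u t, p ≤ s → s ≤ u → u ≤ t → t ≤ q → 
          ‖Ξ s t - Ξ s u - Ξ u t‖ ≤ D * ε ^ η * ω s t ^ (1 + η)) →
        ∃ (F₀ : Finset ℝ) (K : Fin e → ℝ), ∀ F, F₀ ⊆ F →
        ‖SS Ξ F p q - K‖ ≤ C * (D * ε ^ η * ω p q ^ (1 + η)) := by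
      intro p q hp hpq hq H
      refine ⟨{p, q}, Ξ p q, fun F hF => ?_⟩
      exact maximal Ξ hω hp hq hκ (by linarith) hC0 hC
        (fun x hx hx' => hdiag x (by linarith) (by linarith)) H F _ p q le_rfl hpq le_rfl
        (hF (by simp)) (hF (by simp)) le_rfl
    have htriv : ∀ s u t, 0 ≤ s → s ≤ u → u ≤ t → t ≤ T → (s = u ∨ u = t) →
        ‖Ξ s t - Ξ s u - Ξ u t‖ ≤ D * ε ^ η * ω s t ^ (1 + η) := by
      intro s u t h0 h1 h2 h3 hor
      apply hloc ε s u t h0 h1 h2 h3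
      rcases hor with rfl | rfl
      · left; rw [hω.2.1 s h0 (by linarith)]; exact hε.le
      · right; rw [hω.2.1 u (by linarith) h3]; exact hε.le
    refine cousin (T := T) (fun s t => ∃ (F₀ : Finset ℝ) (K : Fin e → ℝ), ∀ F, F₀ ⊆ F →
        ‖SS Ξ F s t - K‖ ≤ C * (D * ε ^ η * ω s t ^ (1 + η))) ?_ ?_ ?_ ?_ h0 h1 h2
    · rintro s u t h0 h1 h2 h3 ⟨F₁, K₁, H₁⟩ ⟨F₂, K₂, H₂⟩
      refine ⟨F₁ ∪ F₂, K₁ + K₂, fun F hF => ?_⟩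
      have i1 := H₁ F (Finset.subset_union_left.trans hF)
      have i2 := H₂ F (Finset.subset_union_right.trans hF)
      have w1 := hω.1 s u h0 h1 (h2.trans h3)
      have w2 := hω.1 u t (h0.trans h1) h2 h3
      have hw : ω s u ^ (1 + η) + ω u t ^ (1 + η) ≤ ω s t ^ (1 + η) :=
        (rpow_superadd w1 w2 (by linarith)).trans
          (Real.rpow_le_rpow (by positivity) (hω.2.2 s u t h0 h1 h2 h3) (by linarith))
      rw [SS_add Ξ F h1 h2, add_sub_add_comm]
      refine (norm_add_le _ _).trans ((add_le_add i1 i2).trans ?_)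
      rw [← mul_add, ← mul_add]
      gcongr
    · intro s h0 h1
      refine ⟨∅, 0, fun F _ => ?_⟩
      rw [SS_self, sub_zero, norm_zero]
      have := Real.rpow_nonneg (hω.1 s s h0 le_rfl h1) (1 + η)
      positivity
    · intro p hp hpT
      obtain ⟨r, hr, hrT, H⟩ := right_small hω hp hpT hε
      refine ⟨r, hr, hrT, fun v hv hvr => hpiece p v hp hv (by linarith) ?_⟩
      intro s u t a b c d
      rcases b.eq_or_lt with b' | b'
      · exact htriv s u t (by linarith) b c (by linarith) (Or.inl b')
      · exact hloc ε s u t (by linarith) b c (by linarith)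
          (Or.inr (H u t (by linarith) c (by linarith)))
    · intro p hp hpT
      obtain ⟨r, hr, hrT, H⟩ := left_small hω hp hpT hε
      refine ⟨r, hr, hrT, fun v hv hvr => hpiece v p (by linarith) hvr hpT ?_⟩
      intro s u t a b c d
      rcases c.eq_or_lt with c' | c'
      · exact htriv s u t (by linarith) b c (by linarith) (Or.inr c')
      · exact hloc ε s u t (by linarith) b c (by linarith)
          (Or.inl (H s u (by linarith) b (by linarith)))
  -- Cauchy
  intro s t h0 h1 h2
  apply cauchySeq_tendsto_of_complete
  rw [Metric.cauchySeq_iff']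
  intro ε' hε'
  have hsmall : ∃ ε : ℝ, 0 < ε ∧ C * (D * ε ^ η * ω s t ^ (1 + η)) < ε' / 2 := by
    have hB : 0 ≤ C * D * ω s t ^ (1 + η) := by
      have := Real.rpow_nonneg (hω.1 s t h0 h1 h2) (1 + η)
      positivity
    set B := C * D * ω s t ^ (1 + η) with hBdef
    have hy : 0 < ε' / 2 / (B + 1) := by positivity
    refine ⟨(ε' / 2 / (B + 1)) ^ (1 / η), by positivity, ?_⟩
    rw [← Real.rpow_mul hy.le, one_div_mul_cancel hη.ne', Real.rpow_one]
    calc C * (D * (ε' / 2 / (B + 1)) * ω s t ^ (1 + η)) = B * (ε' / 2 / (B + 1)) := by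
          rw [hBdef]; ring
      _ < (B + 1) * (ε' / 2 / (B + 1)) := by nlinarith
      _ = ε' / 2 := by field_simp
  obtain ⟨ε, hε, hlt⟩ := hsmall
  obtain ⟨F₀, K, H⟩ := hmain ε hε s t h0 h1 h2
  refine ⟨F₀, fun F hF => ?_⟩
  rw [dist_eq_norm]
  have e1 := H F hF
  have e2 := H F₀ subset_rfl
  calc ‖SS Ξ F s t - SS Ξ F₀ s t‖ = ‖(SS Ξ F s t - K) - (SS Ξ F₀ s t - K)‖ := by
        congr 1; abel
    _ ≤ _ := norm_sub_le _ _
    _ < ε' := by linarith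
end

section
/- Let H be a bialgebra over ℝ with comultiplication Δ : H → H ⊗ H and unit element 1 ∈ H. For linear functionals f, g : H → ℝ define the convolution f ⋆ g : H → ℝ by (f ⋆ g)(x) := (f ⊗ g)(Δ x). Let L : H → H be a linear map satisfying the cocycle condition Δ(L x) = (id_H ⊗ L)(Δ x) + (L x) ⊗ 1 for all x ∈ H. Let e ≥ 1, let Z_s, Z_u ∈ H^e, and let X_su, X_ut, X_st : H → ℝ be linear functionals with X_ut(1) = 1 and satisfying Chen's relation X_st = X_su ⋆ X_ut. Define Ξ_su := X_su(L Z_s), Ξ_ut := X_ut(L Z_u), Ξ_st := X_st(L Z_s) ∈ ℝ^e (all maps applied componentwise). Then Ξ_su + Ξ_ut − Ξ_st = (X_ut ∘ L)(Z_u) − (X_su ⋆ (X_ut ∘ L))(Z_s). Equivalently, defining T_su : H → H by T_su := (X_su ⊗ id_H) ∘ Δ (composed with the canonical isomorphism ℝ ⊗ H ≅ H) and the remainder R_su := Z_u − T_su(Z_s) ∈ H^e, one has Ξ_su + Ξ_ut − Ξ_st = X_ut(L(R_su)). -/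
open TensorProduct

/-- Convolution of linear functionals on a bialgebra: `(f ⋆ g)(x) = (f ⊗ g)(Δ x)`. -/
noncomputable def conv {H : Type*} [Ring H] [Bialgebra ℝ H]
    (f g : H →ₗ[ℝ] ℝ) : H →ₗ[ℝ] ℝ :=
  (TensorProduct.lid ℝ ℝ).toLinearMap ∘ₗ TensorProduct.map f g ∘ₗ Coalgebra.comul

/-- The transpose operator `T_su := (X_su ⊗ id) ∘ Δ` (composed with `ℝ ⊗ H ≅ H`). -/
noncomputable def transOp {H : Type*} [Ring H] [Bialgebra ℝ H]
    (f : H →ₗ[ℝ] ℝ) : H →ₗ[ℝ] H :=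
  (TensorProduct.lid ℝ H).toLinearMap ∘ₗ TensorProduct.map f LinearMap.id ∘ₗ Coalgebra.comul

/-- algebraic Chen-type identity for the increments
`Ξ_su = X_su(L Z_s)`, `Ξ_ut = X_ut(L Z_u)`, `Ξ_st = X_st(L Z_s)`, given the cocycle
condition on `L`, `X_ut(1) = 1` and Chen's relation `X_st = X_su ⋆ X_ut`. -/
theorem chen_increment_identity {H : Type*} [Ring H] [Bialgebra ℝ H]
    (L : H →ₗ[ℝ] H)
    (hL : ∀ x : H, Coalgebra.comul (R := ℝ) (L x)
        = TensorProduct.map LinearMap.id L (Coalgebra.comul (R := ℝ) x) + (L x) ⊗ₜ[ℝ] 1)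
    (e : ℕ) (he : 1 ≤ e) (Zs Zu : Fin e → H)
    (Xsu Xut Xst : H →ₗ[ℝ] ℝ)
    (hXut1 : Xut 1 = 1) (hChen : Xst = conv Xsu Xut) :
    (∀ i : Fin e,
      Xsu (L (Zs i)) + Xut (L (Zu i)) - Xst (L (Zs i))
        = Xut (L (Zu i)) - conv Xsu (Xut ∘ₗ L) (Zs i)) ∧
    (∀ i : Fin e,
      Xsu (L (Zs i)) + Xut (L (Zu i)) - Xst (L (Zs i))
        = Xut (L (Zu i - transOp Xsu (Zs i)))) := by
  have h1 : ∀ x, Xst (L x) = conv Xsu (Xut ∘ₗ L) x + Xsu (L x) := by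
    intro x
    subst hChen
    have h : ∀ y : H ⊗[ℝ] H, TensorProduct.map Xsu Xut (TensorProduct.map LinearMap.id L y)
        = TensorProduct.map Xsu (Xut ∘ₗ L) y := by
      intro y
      induction y using TensorProduct.induction_on with
      | zero => simp
      | tmul a b => simp
      | add a b ha hb => simp only [map_add, ha, hb]
    simp only [conv, LinearMap.comp_apply, hL, map_add, h]
    simp [hXut1]
  have h2 : ∀ x, Xut (L (transOp Xsu x)) = conv Xsu (Xut ∘ₗ L) x := by
    intro x
    simp only [conv, transOp, LinearMap.comp_apply]
    generalize (Coalgebra.comul (R := ℝ) x) = y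
    induction y using TensorProduct.induction_on with
    | zero => simp
    | tmul a b => simp
    | add a b ha hb => simp only [map_add, ha, hb]
  refine ⟨fun i => ?_, fun i => ?_⟩
  · rw [h1]; ring
  · rw [h1, map_sub, map_sub, h2]; ring
end

section
/- Let V be a normed real vector space, N ∈ ℕ, and let π_0, …, π_N : V → V be linear maps with π_0 + ⋯ + π_N = id_V. Let T > 0, let ω be a control on [0,T], let γ > 0, and let C_X, C_R ≥ 0. For each (s,t) ∈ Δ_T let T_{s,t} : V → V be a linear map admitting a decomposition T_{s,t} = Σ_{j=0}^N T^j_{s,t} into linear maps with ‖T^j_{s,t}(x)‖ ≤ C_X · ω(s,t)^{jγ} · ‖x‖ for all x ∈ V and all j. Let Z : [0,T] → V and define, for (s,t) ∈ Δ_T, the remainder R_{s,t} := Z_t − T_{s,t}(Z_s); assume ‖π_j(R_{s,t})‖ ≤ C_R · ω(s,t)^{(N−j)γ} for all j = 0, …, N and all (s,t) ∈ Δ_T. Then sup_{t ∈ [0,T]} ‖Z_t‖ ≤ (N+1) · K(T)^N · (1 + C_X) · (‖Z_0‖ + C_R), where K(T) := max(1, ω(0,T))^γ. -/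
/-- supremum-norm bound for a "controlled path" `Z` in terms of its
initial value and the remainder bound:
`sup_{t ∈ [0,T]} ‖Z_t‖ ≤ (N+1) K(T)^N (1 + C_X)(‖Z_0‖ + C_R)` with
`K(T) = max(1, ω(0,T))^γ`. -/
theorem controlled_path_sup_bound {V : Type*} [NormedAddCommGroup V] [NormedSpace ℝ V]
    (N : ℕ) (π : Fin (N + 1) → V →ₗ[ℝ] V) (hπ : ∑ j, π j = LinearMap.id)
    (T : ℝ) (hT : 0 < T) (ω : ℝ → ℝ → ℝ) (hω : IsControl T ω) (γ : ℝ) (hγ : 0 < γ)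
    (CX CR : ℝ) (hCX : 0 ≤ CX) (hCR : 0 ≤ CR)
    (Tst : ℝ → ℝ → V →ₗ[ℝ] V) (Tj : ℝ → ℝ → Fin (N + 1) → V →ₗ[ℝ] V)
    (hdecomp : ∀ s t : ℝ, 0 ≤ s → s ≤ t → t ≤ T → Tst s t = ∑ j, Tj s t j)
    (hTj : ∀ s t : ℝ, 0 ≤ s → s ≤ t → t ≤ T → ∀ (j : Fin (N + 1)) (x : V),
      ‖Tj s t j x‖ ≤ CX * ω s t ^ ((j : ℕ) * γ) * ‖x‖)
    (Z : ℝ → V)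
    (hR : ∀ s t : ℝ, 0 ≤ s → s ≤ t → t ≤ T → ∀ j : Fin (N + 1),
      ‖π j (Z t - Tst s t (Z s))‖ ≤ CR * ω s t ^ (((N : ℝ) - (j : ℕ)) * γ)) :
    ∀ t : ℝ, 0 ≤ t → t ≤ T →
      ‖Z t‖ ≤ ((N : ℝ) + 1) * (max 1 (ω 0 T) ^ γ) ^ N * (1 + CX) * (‖Z 0‖ + CR) := by
  intro t ht htT
  obtain ⟨h0, -, h2⟩ := hω
  have hw := h0 0 t le_rfl ht htT
  have hwT : ω 0 t ≤ ω 0 T := by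
    have h3 := h2 0 t T le_rfl ht htT le_rfl
    have h4 := h0 t T ht htT le_rfl
    linarith
  have hM : (1 : ℝ) ≤ max 1 (ω 0 T) := le_max_left _ _
  have hwM : ω 0 t ≤ max 1 (ω 0 T) := hwT.trans (le_max_right _ _)
  have hB : (max 1 (ω 0 T) ^ γ) ^ N = max 1 (ω 0 T) ^ ((N : ℝ) * γ) := by
    rw [← Real.rpow_natCast, ← Real.rpow_mul (by linarith), mul_comm]
  have key : ∀ c : ℝ, 0 ≤ c → c ≤ N → ω 0 t ^ (c * γ) ≤ (max 1 (ω 0 T) ^ γ) ^ N := by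
    intro c hc hcN
    rw [hB]
    exact (Real.rpow_le_rpow hw hwM (by positivity)).trans
      (Real.rpow_le_rpow_of_exponent_le hM (by gcongr))
  have hBpos : 0 ≤ (max 1 (ω 0 T) ^ γ) ^ N := by positivity
  generalize (max 1 (ω 0 T) ^ γ) ^ N = B at *
  have hj : ∀ j : Fin (N + 1), ((j : ℕ) : ℝ) ≤ N := fun j => by
    exact_mod_cast Nat.lt_succ_iff.mp j.2
  have e1 : ‖Tst 0 t (Z 0)‖ ≤ ((N : ℝ) + 1) * (CX * B * ‖Z 0‖) := by
    rw [hdecomp 0 t le_rfl ht htT, LinearMap.sum_apply]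
    refine (norm_sum_le_of_le (n := fun _ : Fin (N + 1) => CX * B * ‖Z 0‖) Finset.univ fun j _ => ?_).trans (le_of_eq ?_)
    rotate_left
    · simp
    refine (hTj 0 t le_rfl ht htT j _).trans ?_
    have := key _ (Nat.cast_nonneg _) (hj j)
    gcongr
  have e2 : ‖Z t - Tst 0 t (Z 0)‖ ≤ ((N : ℝ) + 1) * (CR * B) := by
    have h5 : Z t - Tst 0 t (Z 0) = ∑ j, π j (Z t - Tst 0 t (Z 0)) := by
      rw [← LinearMap.sum_apply, hπ, LinearMap.id_apply]
    rw [h5]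
    refine (norm_sum_le_of_le (n := fun _ : Fin (N + 1) => CR * B) Finset.univ fun j _ => ?_).trans (le_of_eq ?_)
    rotate_left
    · simp
    refine (hR 0 t le_rfl ht htT j).trans ?_
    have := key ((N : ℝ) - (j : ℕ)) (by linarith [hj j])
      (by linarith [Nat.cast_nonneg (α := ℝ) (j : ℕ)])
    gcongr
  have e3 : ‖Z t‖ ≤ ‖Z t - Tst 0 t (Z 0)‖ + ‖Tst 0 t (Z 0)‖ := by
    simpa using norm_add_le (Z t - Tst 0 t (Z 0)) (Tst 0 t (Z 0))
  have e4 : 0 ≤ ((N : ℝ) + 1) * B * ‖Z 0‖ := by positivity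
  have e5 : 0 ≤ ((N : ℝ) + 1) * B * CX * CR := by positivity
  nlinarith
end
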